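/- arXiv:1906.05515 — 2 statements merged into one kernel-verified Lean document; each statement's English description precedes it below -/
import Mathlib

section
/- Let S = M(G; I, Λ; P)¹ be a Rees matrix monoid over a group G. Then: (1) for every finitely generated right congruence ρ on S and all a, b, x, y ∈ S, the right ideals (aS)ρ ∩ (bS)ρ and (aS, x) ∩ (bS, y) of S are finitely generated, and hence S is right coherent; and (2) S is weakly right noetherian if and only if I is finite. -/
def IsRightCongruence {M : Type*} [Monoid M] (r : M → M → Prop) : Prop :=
  Equivalence r ∧ ∀ a b c : M, r a b → r (a * c) (b * c)

def RCongGenBy {M : Type*} [Monoid M] (H : Set (M × M)) (r : M → M → Prop) : Prop :=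
  IsRightCongruence r ∧ (∀ p ∈ H, r p.1 p.2) ∧
    ∀ r' : M → M → Prop, IsRightCongruence r' → (∀ p ∈ H, r' p.1 p.2) →
      ∀ x y : M, r x y → r' x y

def FGRightCongruence {M : Type*} [Monoid M] (r : M → M → Prop) : Prop :=
  ∃ H : Set (M × M), H.Finite ∧ RCongGenBy H r

def RightCoherent (M : Type*) [Monoid M] : Prop :=
  ∀ r : M → M → Prop, FGRightCongruence r → ∀ a b : M,
    (∃ C : Finset M,
      {x : M | (∃ s : M, r x (a * s)) ∧ (∃ t : M, r x (b * t))} =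
        ⋃ c ∈ C, {x : M | ∃ s : M, r x (c * s)}) ∧
    FGRightCongruence (fun u v : M => r (a * u) (a * v))

def IsRightIdeal {M : Type*} [Monoid M] (I : Set M) : Prop :=
  ∀ a ∈ I, ∀ s : M, a * s ∈ I

def FGRightIdeal {M : Type*} [Monoid M] (I : Set M) : Prop :=
  ∃ A : Finset M, I = ⋃ a ∈ A, {x : M | ∃ s : M, x = a * s}

def WeaklyRightNoetherian (M : Type*) [Monoid M] : Prop :=
  ∀ I : Set M, IsRightIdeal I → FGRightIdeal I

/-!
In the Rees matrix monoid `S` every `a ≠ 1` satisfies `a ∈ a s S a` for all `s`: the right ideal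
`aS` is minimal and `a` is regular. Minimality makes every right ideal inside a finitely generated
right ideal `K ∌ 1` finitely generated, so finite generation survives intersections.

Let `ρ` be generated by a finite set `H`. If `1 ρ p` for some `p ≠ 1`, then `p = p a t` for some
`t`, so `a t ρ p a t = p ρ 1` and `(aS)ρ = S`. Hence if `(aS)ρ` is proper then `1` is alone in its
`ρ`-class, and `(aS)ρ` lies in the right ideal generated by `a` and the entries `≠ 1` of `H`.

For the annihilator, one chooses a left translation `z ↦ T z` on each minimal right ideal inside
`(aS)ρ`, or a single one if `(aS)ρ = S`, such that `z ρ a T z`; on a minimal right ideal `cS` such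
a translation exists because `c` is regular. The resulting map `ψ` on `(aS)ρ` commutes with right
multiplication, and `(1, ψ a)` together with the pairs `(ψ c, ψ d)`, for `(c, d) ∈ H` with
`c ∈ (aS)ρ`, generates `ann(aρ)`.
-/

section General

variable {M : Type*} [Monoid M] {r : M → M → Prop} {K K' : Set M} {a x : M}

/-- The principal right ideal `aS`. -/
def principalRightIdeal (a : M) : Set M := {x | ∃ s, x = a * s}

/-- The right ideal written `(aS)ρ` in the literature: all elements `ρ`-related to an element of
`aS`. -/
def principalSaturation (r : M → M → Prop) (a : M) : Set M := {x | ∃ t, r x (a * t)}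

/-- The annihilator `ann(aρ)` of the element `aρ` of the right act `S/ρ`. -/
def annihilator (r : M → M → Prop) (a : M) : M → M → Prop := fun u v => r (a * u) (a * v)

theorem self_mem_principalRightIdeal (a : M) : a ∈ principalRightIdeal a :=
  ⟨1, (mul_one a).symm⟩

theorem isRightIdeal_principalRightIdeal (a : M) : IsRightIdeal (principalRightIdeal a) := by
  rintro _ ⟨s, rfl⟩ t
  exact ⟨s * t, mul_assoc a s t⟩

theorem IsRightIdeal.principalRightIdeal_subset (hK : IsRightIdeal K) (ha : a ∈ K) :
    principalRightIdeal a ⊆ K := by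
  rintro _ ⟨s, rfl⟩
  exact hK a ha s

theorem principalRightIdeal_eq_of_mem (hx : x ∈ principalRightIdeal a)
    (ha : a ∈ principalRightIdeal x) : principalRightIdeal x = principalRightIdeal a :=
  ((isRightIdeal_principalRightIdeal a).principalRightIdeal_subset hx).antisymm
    ((isRightIdeal_principalRightIdeal x).principalRightIdeal_subset ha)

theorem IsRightIdeal.eq_univ_of_one_mem (hK : IsRightIdeal K) (h : (1 : M) ∈ K) :
    K = Set.univ :=
  Set.eq_univ_of_forall fun s => one_mul s ▸ hK 1 h s

theorem IsRightIdeal.inter (hK : IsRightIdeal K) (hK' : IsRightIdeal K') :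
    IsRightIdeal (K ∩ K') :=
  fun c hc s => ⟨hK c hc.1 s, hK' c hc.2 s⟩

theorem IsRightIdeal.preimage_mul_left (hK : IsRightIdeal K) (x : M) :
    IsRightIdeal ((x * ·) ⁻¹' K) := by
  intro t ht s
  simpa only [Set.mem_preimage, mul_assoc] using hK (x * t) ht s

theorem FGRightIdeal.isRightIdeal (hK : FGRightIdeal K) : IsRightIdeal K := by
  obtain ⟨A, rfl⟩ := hK
  intro x hx s
  obtain ⟨c, hc, hxc⟩ := Set.mem_iUnion₂.1 hx
  exact Set.mem_iUnion₂.2 ⟨c, hc, isRightIdeal_principalRightIdeal c x hxc s⟩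

theorem IsRightIdeal.fgRightIdeal_iff (hK : IsRightIdeal K) :
    FGRightIdeal K ↔ ∃ A : Finset M, ↑A ⊆ K ∧ ∀ x ∈ K, ∃ c ∈ A, x ∈ principalRightIdeal c := by
  constructor
  · rintro ⟨A, rfl⟩
    exact ⟨A, fun c hc => Set.mem_iUnion₂.2 ⟨c, hc, self_mem_principalRightIdeal c⟩,
      fun x hx => by
        obtain ⟨c, hc, hxc⟩ := Set.mem_iUnion₂.1 hx
        exact ⟨c, hc, hxc⟩⟩
  · rintro ⟨A, hAK, hA⟩
    refine ⟨A, Set.Subset.antisymm (fun x hx => ?_) ?_⟩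
    · obtain ⟨c, hc, hxc⟩ := hA x hx
      exact Set.mem_iUnion₂.2 ⟨c, hc, hxc⟩
    · exact Set.iUnion₂_subset fun c hc => hK.principalRightIdeal_subset (hAK hc)

theorem fgRightIdeal_principalRightIdeal (a : M) : FGRightIdeal (principalRightIdeal a) :=
  ⟨{a}, (Finset.set_biUnion_singleton a principalRightIdeal).symm⟩

theorem IsRightIdeal.fgRightIdeal_of_one_mem (hK : IsRightIdeal K) (h : (1 : M) ∈ K) :
    FGRightIdeal K := by
  have hone := isRightIdeal_principalRightIdeal (1 : M)
  rw [hK.eq_univ_of_one_mem h, ← hone.eq_univ_of_one_mem (self_mem_principalRightIdeal 1)]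
  exact fgRightIdeal_principalRightIdeal 1

theorem weaklyRightNoetherian_of_finite_range_principalRightIdeal
    (h : (Set.range (principalRightIdeal (M := M))).Finite) : WeaklyRightNoetherian M := by
  intro K hK
  obtain ⟨A, hAK, hA⟩ := K.exists_subset_bijOn principalRightIdeal
  have hAfin : A.Finite := hA.finite_iff_finite.2 (h.subset (Set.image_subset_range _ K))
  refine hK.fgRightIdeal_iff.2 ⟨hAfin.toFinset, by simpa using hAK, fun x hx => ?_⟩
  obtain ⟨c, hc, hcx⟩ := hA.surjOn (Set.mem_image_of_mem _ hx)
  exact ⟨c, hAfin.mem_toFinset.2 hc, hcx ▸ self_mem_principalRightIdeal x⟩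

theorem IsRightIdeal.isRightCongruence_rees (hK : IsRightIdeal K) :
    IsRightCongruence fun x y => x = y ∨ x ∈ K ∧ y ∈ K := by
  refine ⟨⟨fun _ => Or.inl rfl, by tauto, ?_⟩, ?_⟩
  · rintro x y z (rfl | hxy) (rfl | hyz) <;> tauto
  · rintro x y s (rfl | ⟨hx, hy⟩)
    exacts [Or.inl rfl, Or.inr ⟨hK x hx s, hK y hy s⟩]

theorem FGRightCongruence.isRightCongruence (hr : FGRightCongruence r) : IsRightCongruence r :=
  let ⟨_, _, hcong, _⟩ := hr
  hcong

theorem IsRightCongruence.self_mem_principalSaturation (hr : IsRightCongruence r) (a : M) :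
    a ∈ principalSaturation r a :=
  ⟨1, (mul_one a).symm ▸ hr.1.refl a⟩

theorem IsRightCongruence.mem_principalSaturation_congr (hr : IsRightCongruence r) {x y : M}
    (h : r x y) : x ∈ principalSaturation r a ↔ y ∈ principalSaturation r a :=
  ⟨fun ⟨t, ht⟩ => ⟨t, hr.1.trans (hr.1.symm h) ht⟩, fun ⟨t, ht⟩ => ⟨t, hr.1.trans h ht⟩⟩

theorem IsRightCongruence.isRightIdeal_principalSaturation (hr : IsRightCongruence r) (a : M) :
    IsRightIdeal (principalSaturation r a) := by
  rintro x ⟨t, ht⟩ s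
  exact ⟨t * s, mul_assoc a t s ▸ hr.2 _ _ s ht⟩

theorem IsRightCongruence.isRightCongruence_annihilator (hr : IsRightCongruence r) (a : M) :
    IsRightCongruence (annihilator r a) :=
  ⟨⟨fun _ => hr.1.refl _, hr.1.symm, hr.1.trans⟩, fun u v s h => by
    simpa only [annihilator, mul_assoc] using hr.2 _ _ s h⟩

theorem FGRightIdeal.exists_eq_biUnion_principalSaturation (hr : IsRightCongruence r)
    (hK : FGRightIdeal K) (hsat : ∀ x y, r x y → y ∈ K → x ∈ K) :
    ∃ C : Finset M, K = ⋃ c ∈ C, principalSaturation r c := by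
  obtain ⟨C, hCK, hC⟩ := hK.isRightIdeal.fgRightIdeal_iff.1 hK
  refine ⟨C, Set.Subset.antisymm (fun x hx => ?_) (Set.iUnion₂_subset ?_)⟩
  · obtain ⟨c, hc, s, rfl⟩ := hC x hx
    exact Set.mem_iUnion₂.2 ⟨c, hc, s, hr.1.refl _⟩
  · rintro c hc x ⟨s, hs⟩
    exact hsat x _ hs (hK.isRightIdeal c (hCK hc) s)

theorem rightCoherent_of_fg
    (hinter : ∀ r : M → M → Prop, FGRightCongruence r → ∀ a b : M,
      FGRightIdeal (principalSaturation r a ∩ principalSaturation r b))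
    (hann : ∀ r : M → M → Prop, FGRightCongruence r → ∀ a : M,
      FGRightCongruence (annihilator r a)) :
    RightCoherent M := by
  intro r hr a b
  have hcong := hr.isRightCongruence
  refine ⟨(hinter r hr a b).exists_eq_biUnion_principalSaturation hcong ?_, hann r hr a⟩
  exact fun x y hxy hy => ⟨(hcong.mem_principalSaturation_congr hxy).2 hy.1,
    (hcong.mem_principalSaturation_congr hxy).2 hy.2⟩

theorem IsRightCongruence.comap_on_principalSaturation (hr : IsRightCongruence r)
    {q : M → M → Prop} (hq : IsRightCongruence q) {ψ : M → M}
    (hψ : ∀ z ∈ principalSaturation r a, ∀ s, ψ (z * s) = ψ z * s)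
    (htriv : ∀ z ∉ principalSaturation r a, ∀ s, z * s ∈ principalSaturation r a →
      ∀ y, r z y → z = y) :
    IsRightCongruence fun x y => r x y ∧ (x ∈ principalSaturation r a → q (ψ x) (ψ y)) := by
  refine ⟨⟨fun x => ⟨hr.1.refl x, fun _ => hq.1.refl _⟩, ?_, ?_⟩, ?_⟩
  · rintro x y ⟨hxy, hψxy⟩
    exact ⟨hr.1.symm hxy, fun hy =>
      hq.1.symm (hψxy ((hr.mem_principalSaturation_congr hxy).2 hy))⟩
  · rintro x y z ⟨hxy, hψxy⟩ ⟨hyz, hψyz⟩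
    exact ⟨hr.1.trans hxy hyz, fun hx =>
      hq.1.trans (hψxy hx) (hψyz ((hr.mem_principalSaturation_congr hxy).1 hx))⟩
  · rintro x y s ⟨hxy, hψxy⟩
    refine ⟨hr.2 x y s hxy, fun hxs => ?_⟩
    by_cases hx : x ∈ principalSaturation r a
    · rw [hψ x hx, hψ y ((hr.mem_principalSaturation_congr hxy).1 hx)]
      exact hq.2 _ _ s (hψxy hx)
    · rw [htriv x hx s hxs y hxy]
      exact hq.1.refl _

theorem FGRightCongruence.annihilator_of_equivariant (hr : FGRightCongruence r) {ψ : M → M}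
    (hψ : ∀ z ∈ principalSaturation r a, ∀ s, ψ (z * s) = ψ z * s)
    (hlift : ∀ z ∈ principalSaturation r a, r z (a * ψ z))
    (htriv : ∀ z ∉ principalSaturation r a, ∀ s, z * s ∈ principalSaturation r a →
      ∀ y, r z y → z = y) :
    FGRightCongruence (annihilator r a) := by
  have hcong := hr.isRightCongruence
  have ha := hcong.self_mem_principalSaturation a
  obtain ⟨H, hHfin, -, hHr, hmin⟩ := hr
  refine ⟨insert (1, ψ a) (Prod.map ψ ψ '' {p ∈ H | p.1 ∈ principalSaturation r a}),
    ((hHfin.subset (Set.sep_subset _ _)).image _).insert _, hcong.isRightCongruence_annihilator a,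
    ?_, ?_⟩
  · rintro p (rfl | ⟨⟨c, d⟩, ⟨hcd, hc⟩, rfl⟩)
    · simpa only [annihilator, mul_one] using hlift a ha
    · have hrcd : r c d := hHr _ hcd
      have hd := (hcong.mem_principalSaturation_congr hrcd).1 hc
      exact hcong.1.trans (hcong.1.symm (hlift c hc)) (hcong.1.trans hrcd (hlift d hd))
  · intro q hq hgen u v huv
    have hψuv : q (ψ a * u) (ψ a * v) := by
      rw [← hψ a ha, ← hψ a ha]
      refine (hmin _ (hcong.comap_on_principalSaturation hq hψ htriv) (fun p hp => ?_) _ _ huv).2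
        (hcong.isRightIdeal_principalSaturation a a ha u)
      exact ⟨hHr p hp, fun hp₁ => hgen _ (Or.inr ⟨p, ⟨hp, hp₁⟩, rfl⟩)⟩
    have hone : ∀ w, q w (ψ a * w) := fun w => by
      simpa only [one_mul] using hq.2 _ _ w (hgen _ (Set.mem_insert _ _))
    exact hq.1.trans (hone u) (hq.1.trans hψuv (hq.1.symm (hone v)))

end General

/-- A coordinate-free form of "completely simple semigroup with an identity adjoined" (groups are
allowed as well): the condition says that each `a ≠ 1` is regular and that `aS` is a minimal right
ideal. -/
def IsCompletelySimpleOffOne (S : Type*) [Monoid S] : Prop :=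
  ∀ a : S, a ≠ 1 → ∀ s, ∃ t, a * s * t * a = a

namespace IsCompletelySimpleOffOne

variable {S : Type*} [Monoid S] {r : S → S → Prop} {K K' : Set S} {a x : S}

theorem mem_principalRightIdeal_of_mem (hS : IsCompletelySimpleOffOne S) (ha : a ≠ 1)
    (hx : x ∈ principalRightIdeal a) : a ∈ principalRightIdeal x := by
  obtain ⟨s, rfl⟩ := hx
  obtain ⟨t, ht⟩ := hS a ha s
  exact ⟨t * a, by rw [← mul_assoc, ht]⟩

theorem mem_of_mul_mem (hS : IsCompletelySimpleOffOne S) (hK : IsRightIdeal K) (ha : a ≠ 1)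
    (hx : a * x ∈ K) : a ∈ K :=
  hK.principalRightIdeal_subset hx (hS.mem_principalRightIdeal_of_mem ha ⟨x, rfl⟩)

theorem exists_mul_mul_eq_self (hS : IsCompletelySimpleOffOne S) (ha : a ≠ 1) :
    ∃ w, a * w * a = a := by
  simpa only [mul_one] using hS a ha 1

theorem fgRightIdeal_of_subset_biUnion (hS : IsCompletelySimpleOffOne S) (hK : IsRightIdeal K)
    (A : Finset S) (hA : ∀ x ∈ K, ∃ c ∈ A, c ≠ 1 ∧ x ∈ principalRightIdeal c) :
    FGRightIdeal K := by
  classical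
  refine hK.fgRightIdeal_iff.2 ⟨A.filter (· ∈ K), fun c hc => (Finset.mem_filter.1 hc).2,
    fun x hx => ?_⟩
  obtain ⟨c, hc, hc1, hxc⟩ := hA x hx
  have hcx := hS.mem_principalRightIdeal_of_mem hc1 hxc
  exact ⟨c, Finset.mem_filter.2 ⟨hc, hK.principalRightIdeal_subset hx hcx⟩, hxc⟩

theorem fgRightIdeal_of_subset (hS : IsCompletelySimpleOffOne S) (hK' : IsRightIdeal K')
    (hK : FGRightIdeal K) (h1 : (1 : S) ∉ K) (hsub : K' ⊆ K) : FGRightIdeal K' := by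
  obtain ⟨A, hAK, hA⟩ := hK.isRightIdeal.fgRightIdeal_iff.1 hK
  refine hS.fgRightIdeal_of_subset_biUnion hK' A fun x hx => ?_
  obtain ⟨c, hc, hxc⟩ := hA x (hsub hx)
  exact ⟨c, hc, ne_of_mem_of_not_mem (hAK hc) h1, hxc⟩

theorem fgRightIdeal_inter (hS : IsCompletelySimpleOffOne S) (hK : FGRightIdeal K)
    (hK' : FGRightIdeal K') : FGRightIdeal (K ∩ K') := by
  have hright := hK.isRightIdeal.inter hK'.isRightIdeal
  by_cases h : (1 : S) ∈ K
  · by_cases h' : (1 : S) ∈ K'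
    · exact hright.fgRightIdeal_of_one_mem ⟨h, h'⟩
    · exact hS.fgRightIdeal_of_subset hright hK' h' Set.inter_subset_right
  · exact hS.fgRightIdeal_of_subset hright hK h Set.inter_subset_left

theorem fgRightIdeal_preimage_mul_left (hS : IsCompletelySimpleOffOne S) (a x : S) :
    FGRightIdeal ((x * ·) ⁻¹' principalRightIdeal a) := by
  have ha := isRightIdeal_principalRightIdeal a
  by_cases hx : x = 1
  · simpa only [hx, one_mul, Set.preimage_id'] using fgRightIdeal_principalRightIdeal a
  by_cases hxa : x ∈ principalRightIdeal a
  · refine (ha.preimage_mul_left x).fgRightIdeal_of_one_mem ?_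
    simpa only [Set.mem_preimage, mul_one] using hxa
  · have hempty : (x * ·) ⁻¹' principalRightIdeal a = ∅ :=
      Set.eq_empty_of_forall_notMem fun t ht => hxa (hS.mem_of_mul_mem ha hx ht)
    exact ⟨∅, by simp [hempty]⟩

theorem one_mem_principalSaturation (hS : IsCompletelySimpleOffOne S) (hr : IsRightCongruence r)
    (hx : x ≠ 1) (h : r 1 x) (a : S) : 1 ∈ principalSaturation r a := by
  obtain ⟨t, ht⟩ := hS.mem_principalRightIdeal_of_mem hx ⟨a, rfl⟩
  have hat : r (a * t) x := by
    simpa only [one_mul, ← mul_assoc, ← ht] using hr.2 1 x (a * t) h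
  exact ⟨t, hr.1.trans h (hr.1.symm hat)⟩

theorem eq_one_of_one_notMem_principalSaturation (hS : IsCompletelySimpleOffOne S)
    (hr : IsRightCongruence r) (h1 : 1 ∉ principalSaturation r a) (h : r 1 x) : x = 1 :=
  by_contra fun hx => h1 (hS.one_mem_principalSaturation hr hx h a)

theorem exists_finset_principalSaturation_subset (hS : IsCompletelySimpleOffOne S)
    (hr : FGRightCongruence r) (h1 : 1 ∉ principalSaturation r a) :
    ∃ A : Finset S, ∀ x ∈ principalSaturation r a,
      ∃ c ∈ A, c ≠ 1 ∧ x ∈ principalRightIdeal c := by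
  classical
  have hcong := hr.isRightCongruence
  obtain ⟨H, hHfin, -, hHr, hmin⟩ := hr
  let A : Finset S := insert a (hHfin.toFinset.image Prod.fst ∪ hHfin.toFinset.image Prod.snd)
  let B : Set S := {x | ∃ c ∈ A, c ≠ 1 ∧ x ∈ principalRightIdeal c}
  have hB : IsRightIdeal B := fun x ⟨c, hc, hc1, hxc⟩ s =>
    ⟨c, hc, hc1, isRightIdeal_principalRightIdeal c x hxc s⟩
  have hAB : ∀ c ∈ A, c ≠ 1 → c ∈ B := fun c hc hc1 =>
    ⟨c, hc, hc1, self_mem_principalRightIdeal c⟩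
  have haB : a ∈ B := hAB a (by simp [A]) (ne_of_mem_of_not_mem
    (hcong.self_mem_principalSaturation a) h1)
  have hrees : ∀ x y, r x y → x = y ∨ x ∈ B ∧ y ∈ B := by
    refine hmin _ hB.isRightCongruence_rees fun p hp => ?_
    have hp₁ : p.1 ∈ A := by simpa [A] using Or.inr (Or.inl ⟨p.2, hp⟩)
    have hp₂ : p.2 ∈ A := by simpa [A] using Or.inr (Or.inr ⟨p.1, hp⟩)
    have heq_one {y : S} (h : r 1 y) : y = 1 :=
      hS.eq_one_of_one_notMem_principalSaturation hcong h1 h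
    have hpr := hHr p hp
    by_cases hp₁1 : p.1 = 1
    · exact Or.inl (hp₁1.trans (heq_one (hp₁1 ▸ hpr)).symm)
    by_cases hp₂1 : p.2 = 1
    · exact absurd (heq_one (hp₂1 ▸ hcong.1.symm hpr)) hp₁1
    · exact Or.inr ⟨hAB _ hp₁ hp₁1, hAB _ hp₂ hp₂1⟩
  refine ⟨A, fun x ⟨t, ht⟩ => ?_⟩
  rcases hrees x (a * t) ht with rfl | ⟨hx, -⟩
  exacts [hB a haB t, hx]

theorem fgRightIdeal_principalSaturation (hS : IsCompletelySimpleOffOne S)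
    (hr : FGRightCongruence r) (a : S) : FGRightIdeal (principalSaturation r a) := by
  have hright := hr.isRightCongruence.isRightIdeal_principalSaturation a
  by_cases h1 : 1 ∈ principalSaturation r a
  · exact hright.fgRightIdeal_of_one_mem h1
  · obtain ⟨A, hA⟩ := hS.exists_finset_principalSaturation_subset hr h1
    exact hS.fgRightIdeal_of_subset_biUnion hright A hA

theorem exists_left_translation_of_principalRightIdeal (hS : IsCompletelySimpleOffOne S)
    (hr : IsRightCongruence r) (h1 : 1 ∉ principalSaturation r a) (R : Set S) :
    ∃ T, ∀ z ∈ principalSaturation r a, principalRightIdeal z = R → r z (a * (T * z)) := by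
  by_cases hR : ∃ c ∈ principalSaturation r a, principalRightIdeal c = R
  · obtain ⟨c, hc, rfl⟩ := hR
    obtain ⟨w, hw⟩ := hS.exists_mul_mul_eq_self (ne_of_mem_of_not_mem hc h1)
    obtain ⟨u, hu⟩ := hc
    refine ⟨u * w, fun z _ hz => ?_⟩
    obtain ⟨s, rfl⟩ : z ∈ principalRightIdeal c := hz ▸ self_mem_principalRightIdeal z
    have h : r (c * w * c * s) (a * (u * w * (c * s))) := by
      simpa only [mul_assoc] using hr.2 _ _ (w * (c * s)) hu
    rwa [hw] at h
  · exact ⟨1, fun z hz hzR => absurd ⟨z, hz, hzR⟩ hR⟩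

theorem exists_equivariant_lift (hS : IsCompletelySimpleOffOne S) (hr : IsRightCongruence r)
    (a : S) :
    ∃ ψ : S → S, (∀ z ∈ principalSaturation r a, ∀ s, ψ (z * s) = ψ z * s) ∧
      ∀ z ∈ principalSaturation r a, r z (a * ψ z) := by
  by_cases h1 : 1 ∈ principalSaturation r a
  · obtain ⟨t, ht⟩ := h1
    refine ⟨(t * ·), fun z _ s => (mul_assoc t z s).symm, fun z _ => ?_⟩
    simpa only [one_mul, mul_assoc] using hr.2 _ _ z ht
  · choose T hT using hS.exists_left_translation_of_principalRightIdeal hr h1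
    refine ⟨fun z => T (principalRightIdeal z) * z, fun z hz s => ?_, fun z hz => hT _ z hz rfl⟩
    have hzs : principalRightIdeal (z * s) = principalRightIdeal z :=
      principalRightIdeal_eq_of_mem ⟨s, rfl⟩
        (hS.mem_principalRightIdeal_of_mem (ne_of_mem_of_not_mem hz h1) ⟨s, rfl⟩)
    simp only [hzs, mul_assoc]

theorem fgRightCongruence_annihilator (hS : IsCompletelySimpleOffOne S)
    (hr : FGRightCongruence r) (a : S) : FGRightCongruence (annihilator r a) := by
  have hcong := hr.isRightCongruence
  have hright := hcong.isRightIdeal_principalSaturation a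
  obtain ⟨ψ, hψ, hlift⟩ := hS.exists_equivariant_lift hcong a
  refine hr.annihilator_of_equivariant hψ hlift fun z hz s hzs y hzy => ?_
  obtain rfl : z = 1 := by_contra fun hz1 => hz (hS.mem_of_mul_mem hright hz1 hzs)
  exact (hS.eq_one_of_one_notMem_principalSaturation hcong hz hzy).symm

theorem rightCoherent (hS : IsCompletelySimpleOffOne S) : RightCoherent S :=
  rightCoherent_of_fg
    (fun _ hr a b => hS.fgRightIdeal_inter (hS.fgRightIdeal_principalSaturation hr a)
      (hS.fgRightIdeal_principalSaturation hr b))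
    fun _ hr => hS.fgRightCongruence_annihilator hr

theorem weaklyRightNoetherian_iff (hS : IsCompletelySimpleOffOne S) :
    WeaklyRightNoetherian S ↔ (Set.range (principalRightIdeal (M := S))).Finite := by
  refine ⟨fun hW => ?_, weaklyRightNoetherian_of_finite_range_principalRightIdeal⟩
  -- Unlike `{x | x ≠ 1}`, the set `K` is a right ideal even when `S` is a group.
  let K : Set S := {x | 1 ∉ principalRightIdeal x}
  have hK : IsRightIdeal K := fun x hx s h1 =>
    hx ((isRightIdeal_principalRightIdeal x).principalRightIdeal_subset ⟨s, rfl⟩ h1)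
  obtain ⟨A, hAK, hA⟩ := hK.fgRightIdeal_iff.1 (hW K hK)
  refine ((A.finite_toSet.image principalRightIdeal).insert Set.univ).subset ?_
  rintro _ ⟨x, rfl⟩
  by_cases hx : x ∈ K
  · obtain ⟨c, hc, hxc⟩ := hA x hx
    have hc1 : c ≠ 1 := fun h => hAK hc (h ▸ self_mem_principalRightIdeal c)
    exact Or.inr ⟨c, hc, (principalRightIdeal_eq_of_mem hxc
      (hS.mem_principalRightIdeal_of_mem hc1 hxc)).symm⟩
  · exact Or.inl ((isRightIdeal_principalRightIdeal x).eq_univ_of_one_mem (not_not.1 hx))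

end IsCompletelySimpleOffOne

section Rees

variable {G : Type*} [Group G] {I L : Type*} {P : L → I → G} {S : Type*} [Monoid S]
  {f : I × G × L → S}

theorem exists_rees_mul_eq (hcover : ∀ s : S, s = 1 ∨ ∃ p : I × G × L, f p = s)
    (hmul : ∀ i a l j b m, f (i, a, l) * f (j, b, m) = f (i, a * P l j * b, m))
    (i : I) (a : G) (l : L) (s : S) : ∃ b m, f (i, a, l) * s = f (i, b, m) := by
  rcases hcover s with rfl | ⟨⟨j, b, m⟩, rfl⟩
  exacts [⟨a, l, mul_one _⟩, ⟨_, _, hmul ..⟩]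

theorem rees_mem_principalRightIdeal
    (hmul : ∀ i a l j b m, f (i, a, l) * f (j, b, m) = f (i, a * P l j * b, m))
    (i : I) (a b : G) (l m : L) : f (i, b, m) ∈ principalRightIdeal (f (i, a, l)) :=
  ⟨f (i, (a * P l i)⁻¹ * b, m), by rw [hmul, mul_inv_cancel_left]⟩

theorem isCompletelySimpleOffOne_of_rees
    (hcover : ∀ s : S, s = 1 ∨ ∃ p : I × G × L, f p = s)
    (hmul : ∀ i a l j b m, f (i, a, l) * f (j, b, m) = f (i, a * P l j * b, m)) :
    IsCompletelySimpleOffOne S := by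
  intro x hx s
  obtain ⟨⟨i, a, l⟩, rfl⟩ := (hcover x).resolve_left hx
  obtain ⟨b, m, hs⟩ := exists_rees_mul_eq hcover hmul i a l s
  refine ⟨f (i, (b * P m i)⁻¹ * (P l i)⁻¹, l), ?_⟩
  rw [hs, hmul, mul_inv_cancel_left, hmul, inv_mul_cancel, one_mul]

theorem rees_principalRightIdeal_injective (hinj : Function.Injective f)
    (hcover : ∀ s : S, s = 1 ∨ ∃ p : I × G × L, f p = s)
    (hmul : ∀ i a l j b m, f (i, a, l) * f (j, b, m) = f (i, a * P l j * b, m)) (l : L) :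
    Function.Injective fun i => principalRightIdeal (f (i, 1, l)) := by
  intro i j hij
  obtain ⟨s, hs⟩ := hij.subset (self_mem_principalRightIdeal (f (i, 1, l)))
  obtain ⟨b, m, hb⟩ := exists_rees_mul_eq hcover hmul j 1 l s
  exact congrArg Prod.fst (hinj (hs.trans hb))

theorem finite_range_principalRightIdeal_rees_iff [Nonempty L]
    (hinj : Function.Injective f) (hcover : ∀ s : S, s = 1 ∨ ∃ p : I × G × L, f p = s)
    (hmul : ∀ i a l j b m, f (i, a, l) * f (j, b, m) = f (i, a * P l j * b, m)) :
    (Set.range (principalRightIdeal (M := S))).Finite ↔ Finite I := by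
  obtain ⟨l⟩ := ‹Nonempty L›
  rw [← Set.finite_range_iff (rees_principalRightIdeal_injective hinj hcover hmul l)]
  constructor
  · exact fun h => h.subset (Set.range_comp_subset_range (fun i => f (i, 1, l)) principalRightIdeal)
  · refine fun h => (h.insert (principalRightIdeal 1)).subset ?_
    rintro _ ⟨x, rfl⟩
    rcases hcover x with rfl | ⟨⟨i, a, m⟩, rfl⟩
    · exact Or.inl rfl
    · exact Or.inr ⟨i, principalRightIdeal_eq_of_mem (rees_mem_principalRightIdeal hmul ..)
        (rees_mem_principalRightIdeal hmul ..)⟩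

end Rees

theorem stmt3 {G : Type*} [Group G] {I L : Type*} [Nonempty I] [Nonempty L]
    (P : L → I → G)
    {S : Type*} [Monoid S] (f : I × G × L → S)
    (hinj : Function.Injective f)
    (hne1 : ∀ p : I × G × L, f p ≠ 1)
    (hcover : ∀ s : S, s = 1 ∨ ∃ p : I × G × L, f p = s)
    (hmul : ∀ (i : I) (a : G) (l : L) (j : I) (b : G) (m : L),
      f (i, a, l) * f (j, b, m) = f (i, a * P l j * b, m)) :
    ((∀ r : S → S → Prop, FGRightCongruence r → ∀ a b x y : S,
      FGRightIdeal ({s : S | ∃ t : S, r s (a * t)} ∩ {s : S | ∃ t : S, r s (b * t)}) ∧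
      FGRightIdeal ({t : S | ∃ u : S, x * t = a * u} ∩ {t : S | ∃ v : S, y * t = b * v})) ∧
     RightCoherent S) ∧
    (WeaklyRightNoetherian S ↔ Finite I) := by
  have hS : IsCompletelySimpleOffOne S := isCompletelySimpleOffOne_of_rees hcover hmul
  refine ⟨⟨fun r hr a b x y => ⟨?_, ?_⟩, hS.rightCoherent⟩, ?_⟩
  · exact hS.fgRightIdeal_inter (hS.fgRightIdeal_principalSaturation hr a)
      (hS.fgRightIdeal_principalSaturation hr b)
  · exact hS.fgRightIdeal_inter (hS.fgRightIdeal_preimage_mul_left a x)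
      (hS.fgRightIdeal_preimage_mul_left b y)
  · exact hS.weaklyRightNoetherian_iff.trans
      (finite_range_principalRightIdeal_rees_iff hinj hcover hmul)
end

section
/- Let S be a monoid and let J be a monoid 𝓙-class of S, with identity element e. Then J is weakly left unitary and weakly right unitary: for a, b with a ∈ J, if ab ∈ J then eb ∈ J, and if ba ∈ J then be ∈ J. -/
section Semigroup

variable {S : Type*} [Semigroup S] {a b c e : S}

/-- Green's preorder `a ≤_𝓙 b`, encoded as `a ∈ SbS`. In a monoid this is `SaS ⊆ SbS`. In a
semigroup it agrees with the usual `a ∈ S¹bS¹` as soon as `a` or `b` is idempotent, but it may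
fail to be reflexive elsewhere. -/
def GreenJLE (a b : S) : Prop :=
  ∃ s t : S, a = s * b * t

/-- The `𝓙`-class of `e`: the elements `b` with `b ≤_𝓙 e` and `e ≤_𝓙 b`. In a semigroup without
identity this is the usual class when `e` is idempotent, see `GreenJLE`. -/
def greenJClass (e : S) : Set S :=
  {b | GreenJLE b e ∧ GreenJLE e b}

/-- `T` is weakly left unitary with respect to `e`; in the usual notion `T` is a subsemigroup with
identity `e`, neither of which is part of this predicate. -/
def IsWeaklyLeftUnitary (T : Set S) (e : S) : Prop :=
  ∀ a ∈ T, ∀ b : S, a * b ∈ T → e * b ∈ T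

/-- `T` is weakly right unitary with respect to `e`, the left-right dual of
`IsWeaklyLeftUnitary`. -/
def IsWeaklyRightUnitary (T : Set S) (e : S) : Prop :=
  ∀ a ∈ T, ∀ b : S, b * a ∈ T → b * e ∈ T

theorem GreenJLE.of_mul_left (h : GreenJLE c (a * b)) : GreenJLE c b := by
  obtain ⟨s, t, rfl⟩ := h
  exact ⟨s * a, t, by simp only [mul_assoc]⟩

theorem GreenJLE.of_mul_right (h : GreenJLE c (a * b)) : GreenJLE c a := by
  obtain ⟨s, t, rfl⟩ := h
  exact ⟨s, b * t, by simp only [mul_assoc]⟩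

theorem greenJLE_mul_right_of_isIdempotentElem (he : IsIdempotentElem e) (b : S) :
    GreenJLE (e * b) e :=
  ⟨e, b, by rw [he.eq]⟩

theorem greenJLE_mul_left_of_isIdempotentElem (he : IsIdempotentElem e) (b : S) :
    GreenJLE (b * e) e :=
  ⟨b, e, by rw [mul_assoc, he.eq]⟩

theorem isWeaklyLeftUnitary_greenJClass (he : IsIdempotentElem e)
    (her : ∀ a ∈ greenJClass e, a * e = a) : IsWeaklyLeftUnitary (greenJClass e) e := by
  intro a ha b hab
  have hfactor : a * b = a * (e * b) := by rw [← mul_assoc, her a ha]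
  have hle : GreenJLE e (a * (e * b)) := hfactor ▸ hab.2
  exact ⟨greenJLE_mul_right_of_isIdempotentElem he b, hle.of_mul_left⟩

theorem isWeaklyRightUnitary_greenJClass (he : IsIdempotentElem e)
    (hel : ∀ a ∈ greenJClass e, e * a = a) : IsWeaklyRightUnitary (greenJClass e) e := by
  intro a ha b hba
  have hfactor : b * a = b * e * a := by rw [mul_assoc, hel a ha]
  have hle : GreenJLE e (b * e * a) := hfactor ▸ hba.2
  exact ⟨greenJLE_mul_left_of_isIdempotentElem he b, hle.of_mul_right⟩

theorem stmt9_general (he : IsIdempotentElem e)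
    (hel : ∀ a ∈ greenJClass e, e * a = a) (her : ∀ a ∈ greenJClass e, a * e = a) :
    IsWeaklyLeftUnitary (greenJClass e) e ∧ IsWeaklyRightUnitary (greenJClass e) e :=
  ⟨isWeaklyLeftUnitary_greenJClass he her, isWeaklyRightUnitary_greenJClass he hel⟩

end Semigroup

theorem stmt9 {S : Type*} [Monoid S] (J : Set S)
    (hclosed : ∀ a ∈ J, ∀ b ∈ J, a * b ∈ J)
    (e : S) (he : e ∈ J)
    (hel : ∀ a ∈ J, e * a = a) (her : ∀ a ∈ J, a * e = a)
    (hJclass : ∀ a ∈ J, ∀ b : S,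
      (b ∈ J ↔ ((∃ s t : S, b = s * a * t) ∧ (∃ s t : S, a = s * b * t)))) :
    ∀ a ∈ J, ∀ b : S, (a * b ∈ J → e * b ∈ J) ∧ (b * a ∈ J → b * e ∈ J) := by
  obtain rfl : J = greenJClass e := Set.ext (hJclass e he)
  have ⟨hleft, hright⟩ := stmt9_general (hel e he) hel her
  exact fun a ha b => ⟨hleft a ha b, hright a ha b⟩
end
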